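/- Let (X,d) be a proper complete separable metric space and let 1 <= p < q < infinity. Then every closed w_q-R-neighborhood of a w_q-compact subset of P_q(X) is compact in (P_p(X), w_p): if K is a compact subset of (P_q(X), w_q) and R >= 0, then the set {nu in P_q(X) : w_q(mu, nu) <= R for some mu in K} is sequentially compact with respect to the metric w_p. -/

import Mathlib

open MeasureTheory Topology Filter Metric Set
open scoped ENNReal NNReal

noncomputable section

variable {X : Type*}

/-- `π` is a coupling of `μ` and `ν`, i.e. a measure on `X × X` with marginals `μ` and `ν`. -/
def IsCoupling [MeasurableSpace X] (π : Measure (X × X)) (μ ν : Measure X) : Prop :=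
  π.map Prod.fst = μ ∧ π.map Prod.snd = ν

/-- The `p`-th power optimal transport cost between `μ` and `ν`. -/
def wCost [MetricSpace X] [MeasurableSpace X] (p : ℝ) (μ ν : Measure X) : ℝ≥0∞ :=
  ⨅ π ∈ {π : Measure (X × X) | IsProbabilityMeasure π ∧ IsCoupling π μ ν},
    ∫⁻ q, ENNReal.ofReal (dist q.1 q.2 ^ p) ∂π

/-- The Wasserstein distance of order `p` (the `p`-th root of the optimal cost), as a real
number. -/
def Wp [MetricSpace X] [MeasurableSpace X] (p : ℝ) (μ ν : Measure X) : ℝ :=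
  ((wCost p μ ν) ^ (1 / p)).toReal

/-- `μ` has finite `p`-th moment about the base point `x₀`. -/
def FiniteMoment [MetricSpace X] [MeasurableSpace X] (p : ℝ) (x₀ : X) (μ : Measure X) : Prop :=
  ∫⁻ x, ENNReal.ofReal (dist x₀ x ^ p) ∂μ < ⊤

/-- The Wasserstein space `P_p(X)`: Borel probability measures with finite `p`-th moment. -/
def Pp [MetricSpace X] [MeasurableSpace X] (p : ℝ) (x₀ : X) : Set (Measure X) :=
  {μ | IsProbabilityMeasure μ ∧ FiniteMoment p x₀ μ}

/-- The convex combination `t • μ + (1 - t) • ν` of two measures. -/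
def mix [MeasurableSpace X] (t : ℝ) (μ ν : Measure X) : Measure X :=
  ENNReal.ofReal t • μ + ENNReal.ofReal (1 - t) • ν

/-- `μₙ → μ` in the weak topology: integrals of bounded continuous functions converge. -/
def WeakConv [MeasurableSpace X] [TopologicalSpace X] (μs : ℕ → Measure X) (μ : Measure X) :
    Prop :=
  ∀ g : BoundedContinuousFunction X ℝ,
    Tendsto (fun n => ∫ x, g x ∂(μs n)) atTop (𝓝 (∫ x, g x ∂μ))

/-- `μₙ → μ` with respect to the Wasserstein distance of order `p`. -/
def WpTendsto [MetricSpace X] [MeasurableSpace X] (p : ℝ) (μs : ℕ → Measure X)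
    (μ : Measure X) : Prop :=
  Tendsto (fun n => Wp p (μs n) μ) atTop (𝓝 0)

/-- A set of measures is sequentially compact for the Wasserstein distance of order `p`. -/
def WpSeqCompact [MetricSpace X] [MeasurableSpace X] (p : ℝ) (S : Set (Measure X)) : Prop :=
  ∀ μs : ℕ → Measure X, (∀ n, μs n ∈ S) →
    ∃ μ ∈ S, ∃ φ : ℕ → ℕ, StrictMono φ ∧ WpTendsto p (fun n => μs (φ n)) μ

/-- A set of measures is sequentially compact for the weak topology. -/
def WeakSeqCompact [MeasurableSpace X] [TopologicalSpace X] (S : Set (Measure X)) : Prop :=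
  ∀ μs : ℕ → Measure X, (∀ n, μs n ∈ S) →
    ∃ μ ∈ S, ∃ φ : ℕ → ℕ, StrictMono φ ∧ WeakConv (fun n => μs (φ n)) μ

/-!
On a set of probability measures with bounded `q`-th moments, weak convergence implies
`w_p`-convergence for every `p < q`: weak convergence to `ν` produces couplings that move all but a
small amount of mass by less than `ε`, and by Hölder's inequality the remaining mass contributes
little to the cost of order `p`. A `w_q`-neighborhood of a `w_q`-bounded set has bounded `q`-th
moments, hence is weakly relatively compact by Markov's inequality and Prokhorov's theorem when
closed balls are compact. The limit stays in the neighborhood because `w_q` is weakly lower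
semicontinuous.
-/

/-- The `q`-th moment of `μ` about `x₀`, finite exactly when `FiniteMoment q x₀ μ` holds. -/
def distMoment [PseudoMetricSpace X] [MeasurableSpace X] (q : ℝ) (x₀ : X) (μ : Measure X) :
    ℝ≥0∞ :=
  ∫⁻ x, ENNReal.ofReal (dist x₀ x ^ q) ∂μ

/-- The cost of order `q` of a transport plan `π`, the quantity minimised in `wCost`. -/
def transportCost [PseudoMetricSpace X] [MeasurableSpace X] (q : ℝ) (π : Measure (X × X)) :
    ℝ≥0∞ :=
  ∫⁻ z, ENNReal.ofReal (dist z.1 z.2 ^ q) ∂π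

/-- The probability measures whose `q`-th moment about `x₀` is at most `C`. A subset of `P_q(X)` is
bounded for the Wasserstein distance exactly when it lies in such a set for some finite `C`. -/
def momentBall [PseudoMetricSpace X] [MeasurableSpace X] (q : ℝ) (x₀ : X) (C : ℝ≥0∞) :
    Set (Measure X) :=
  {μ | IsProbabilityMeasure μ ∧ distMoment q x₀ μ ≤ C}

instance [MeasurableSpace X] :
    CanLift (Measure X) (ProbabilityMeasure X) (↑) IsProbabilityMeasure :=
  ⟨fun μ hμ => ⟨⟨μ, hμ⟩, rfl⟩⟩

section Coupling

variable [MeasurableSpace X] {π : Measure (X × X)} {μ ν : Measure X}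

theorem IsCoupling.swap (h : IsCoupling π μ ν) : IsCoupling (π.map Prod.swap) ν μ := by
  constructor
  · rw [Measure.map_map measurable_fst measurable_swap]
    exact h.2
  · rw [Measure.map_map measurable_snd measurable_swap]
    exact h.1

theorem IsCoupling.measure_univ_eq (h : IsCoupling π μ ν) : π univ = μ univ := by
  rw [← h.1, ← Measure.fst, Measure.fst_univ]

theorem IsCoupling.isProbabilityMeasure [IsProbabilityMeasure μ] (h : IsCoupling π μ ν) :
    IsProbabilityMeasure π :=
  ⟨h.measure_univ_eq.trans measure_univ⟩

theorem IsCoupling.lintegral_fst (h : IsCoupling π μ ν) {f : X → ℝ≥0∞} (hf : Measurable f) :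
    ∫⁻ z, f z.1 ∂π = ∫⁻ x, f x ∂μ := by
  rw [← h.1, lintegral_map hf measurable_fst]

theorem IsCoupling.lintegral_snd (h : IsCoupling π μ ν) {f : X → ℝ≥0∞} (hf : Measurable f) :
    ∫⁻ z, f z.2 ∂π = ∫⁻ x, f x ∂ν := by
  rw [← h.2, lintegral_map hf measurable_snd]

theorem IsCoupling.add {π' : Measure (X × X)} {μ' ν' : Measure X} (h : IsCoupling π μ ν)
    (h' : IsCoupling π' μ' ν') : IsCoupling (π + π') (μ + μ') (ν + ν') :=
  ⟨by rw [Measure.map_add _ _ measurable_fst, h.1, h'.1],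
    by rw [Measure.map_add _ _ measurable_snd, h.2, h'.2]⟩

theorem isCoupling_inv_smul_prod [IsFiniteMeasure μ] [IsFiniteMeasure ν]
    (h : μ univ = ν univ) : IsCoupling ((μ univ)⁻¹ • μ.prod ν) μ ν := by
  rcases eq_or_ne (μ univ) 0 with h₀ | h₀
  · obtain rfl := Measure.measure_univ_eq_zero.1 h₀
    obtain rfl := Measure.measure_univ_eq_zero.1 (h ▸ h₀)
    simp [IsCoupling]
  · have hinv : (μ univ)⁻¹ * μ univ = 1 := ENNReal.inv_mul_cancel h₀ (measure_ne_top μ univ)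
    constructor
    · rw [Measure.map_smul, Measure.map_fst_prod, ← h, smul_smul, hinv, one_smul]
    · rw [Measure.map_smul, Measure.map_snd_prod, smul_smul, hinv, one_smul]

theorem exists_isCoupling_ge [IsFiniteMeasure μ] [IsFiniteMeasure ν] (h : μ univ = ν univ)
    (hfst : π.fst ≤ μ) (hsnd : π.snd ≤ ν) : ∃ π', IsCoupling π' μ ν ∧ π ≤ π' := by
  have : IsFiniteMeasure π.fst := isFiniteMeasure_of_le μ hfst
  have : IsFiniteMeasure π.snd := isFiniteMeasure_of_le ν hsnd
  have hmass : (μ - π.fst) univ = (ν - π.snd) univ := by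
    rw [Measure.sub_apply MeasurableSet.univ hfst, Measure.sub_apply MeasurableSet.univ hsnd, h,
      Measure.fst_univ, Measure.snd_univ]
  have hπ : IsCoupling π π.fst π.snd := ⟨rfl, rfl⟩
  have hrest := hπ.add (isCoupling_inv_smul_prod hmass)
  rw [add_comm π.fst, add_comm π.snd, Measure.sub_add_cancel_of_le hfst,
    Measure.sub_add_cancel_of_le hsnd] at hrest
  exact ⟨_, hrest, Measure.le_add_right le_rfl⟩

theorem sum_smul_restrict_le {ι : Type*} [Countable ι] {A : ι → Set X}
    (hA : ∀ i, MeasurableSet (A i)) (hd : Pairwise (Function.onFun Disjoint A)) {c : ι → ℝ≥0∞}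
    (hc : ∀ i, c i ≤ 1) : Measure.sum (fun i => c i • μ.restrict (A i)) ≤ μ := by
  calc Measure.sum (fun i => c i • μ.restrict (A i))
      ≤ Measure.sum (fun i => μ.restrict (A i)) := by
        refine Measure.le_iff.2 fun s hs => ?_
        simp only [Measure.sum_apply _ hs, Measure.smul_apply, smul_eq_mul]
        exact ENNReal.tsum_le_tsum fun i => mul_le_of_le_one_left' (hc i)
    _ = μ.restrict (⋃ i, A i) := (Measure.restrict_iUnion hd hA).symm
    _ ≤ μ := Measure.restrict_le_self

theorem inv_max_mul_mul_eq_min {a b : ℝ≥0∞} (ha : a ≠ ⊤) (hb : b ≠ ⊤) :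
    (max a b)⁻¹ * (a * b) = min a b := by
  rcases eq_or_ne (max a b) 0 with h | h
  · obtain ⟨rfl, rfl⟩ : a = 0 ∧ b = 0 := by simpa using h
    simp
  · rw [← max_mul_min a b, ← mul_assoc, ENNReal.inv_mul_cancel h (by simp [ha, hb]), one_mul]

theorem exists_isCoupling_tsum_min_le {ι : Type*} [Countable ι] [IsFiniteMeasure μ]
    [IsFiniteMeasure ν] (h : μ univ = ν univ) {A : ι → Set X} (hA : ∀ i, MeasurableSet (A i))
    (hd : Pairwise (Function.onFun Disjoint A)) :
    ∃ π, IsCoupling π μ ν ∧ ∑' i, min (μ (A i)) (ν (A i)) ≤ π (⋃ i, A i ×ˢ A i) := by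
  -- Dividing by the larger of the two masses keeps both marginals of `π₀` below `μ` and `ν`.
  let c i := (max (μ (A i)) (ν (A i)))⁻¹
  let π₀ := Measure.sum fun i => c i • (μ.restrict (A i)).prod (ν.restrict (A i))
  have hfst : π₀.fst ≤ μ := by
    rw [Measure.fst_sum]
    simp only [Measure.fst, Measure.map_smul, Measure.map_fst_prod, smul_smul,
      Measure.restrict_apply_univ]
    refine sum_smul_restrict_le hA hd fun i => ?_
    exact (mul_le_mul_right (le_max_right _ _) _).trans (ENNReal.inv_mul_le_one _)
  have hsnd : π₀.snd ≤ ν := by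
    rw [Measure.snd_sum]
    simp only [Measure.snd, Measure.map_smul, Measure.map_snd_prod, smul_smul,
      Measure.restrict_apply_univ]
    refine sum_smul_restrict_le hA hd fun i => ?_
    exact (mul_le_mul_right (le_max_left _ _) _).trans (ENNReal.inv_mul_le_one _)
  obtain ⟨π, hπ, hle⟩ := exists_isCoupling_ge h hfst hsnd
  refine ⟨π, hπ, le_trans ?_ (hle _)⟩
  rw [Measure.sum_apply _ (MeasurableSet.iUnion fun i => (hA i).prod (hA i))]
  refine ENNReal.tsum_le_tsum fun i => ?_
  calc min (μ (A i)) (ν (A i))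
      = c i * (μ (A i) * ν (A i)) :=
        (inv_max_mul_mul_eq_min (measure_ne_top _ _) (measure_ne_top _ _)).symm
    _ = (c i • (μ.restrict (A i)).prod (ν.restrict (A i))) (A i ×ˢ A i) := by simp
    _ ≤ (c i • (μ.restrict (A i)).prod (ν.restrict (A i))) (⋃ j, A j ×ˢ A j) :=
        measure_mono (subset_iUnion (fun j => A j ×ˢ A j) i)

end Coupling

section TransportCost

variable [PseudoMetricSpace X] [MeasurableSpace X] {π : Measure (X × X)} {μ ν : Measure X}
  {x₀ : X} {p q ε : ℝ}

theorem ofReal_rpow_le_two_rpow_mul_add {a b c : ℝ} (ha : 0 ≤ a) (hb : 0 ≤ b) (hc : 0 ≤ c)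
    (h : a ≤ b + c) (hq : 0 ≤ q) :
    ENNReal.ofReal (a ^ q) ≤ 2 ^ q * (ENNReal.ofReal (b ^ q) + ENNReal.ofReal (c ^ q)) := by
  rw [← ENNReal.ofReal_rpow_of_nonneg ha hq, ← ENNReal.ofReal_rpow_of_nonneg hb hq,
    ← ENNReal.ofReal_rpow_of_nonneg hc hq]
  calc ENNReal.ofReal a ^ q ≤ (2 * max (ENNReal.ofReal b) (ENNReal.ofReal c)) ^ q := by
        refine ENNReal.rpow_le_rpow ?_ hq
        rw [two_mul]
        exact (ENNReal.ofReal_le_ofReal h).trans <| ENNReal.ofReal_add_le.trans <|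
          add_le_add (le_max_left _ _) (le_max_right _ _)
    _ = 2 ^ q * max (ENNReal.ofReal b ^ q) (ENNReal.ofReal c ^ q) := by
        rw [ENNReal.mul_rpow_of_nonneg _ _ hq, (ENNReal.monotone_rpow_of_nonneg hq).map_max]
    _ ≤ 2 ^ q * (ENNReal.ofReal b ^ q + ENNReal.ofReal c ^ q) :=
        mul_le_mul_right (max_le_add_of_nonneg zero_le zero_le) _

theorem transportCost_map_swap (q : ℝ) (π : Measure (X × X)) :
    transportCost q (π.map Prod.swap) = transportCost q π := by
  refine (lintegral_map_equiv _ MeasurableEquiv.prodComm).trans (lintegral_congr fun z => ?_)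
  exact congrArg (fun t => ENNReal.ofReal (t ^ q)) (dist_comm z.2 z.1)

theorem IsCoupling.transportCost_le [OpensMeasurableSpace X] (h : IsCoupling π μ ν) (x₀ : X)
    (hq : 0 ≤ q) : transportCost q π ≤ 2 ^ q * (distMoment q x₀ μ + distMoment q x₀ ν) := by
  calc transportCost q π
      ≤ ∫⁻ z, 2 ^ q * (ENNReal.ofReal (dist x₀ z.1 ^ q) + ENNReal.ofReal (dist x₀ z.2 ^ q)) ∂π :=
        lintegral_mono fun z => ofReal_rpow_le_two_rpow_mul_add dist_nonneg dist_nonneg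
          dist_nonneg (dist_triangle_left z.1 z.2 x₀) hq
    _ = 2 ^ q * (distMoment q x₀ μ + distMoment q x₀ ν) := by
        rw [lintegral_const_mul' _ _ (by finiteness), lintegral_add_left (by fun_prop),
          h.lintegral_fst (f := fun x => ENNReal.ofReal (dist x₀ x ^ q)) (by fun_prop),
          h.lintegral_snd (f := fun x => ENNReal.ofReal (dist x₀ x ^ q)) (by fun_prop)]
        rfl

theorem IsCoupling.distMoment_le [OpensMeasurableSpace X] (h : IsCoupling π μ ν) (x₀ : X)
    (hq : 0 ≤ q) : distMoment q x₀ ν ≤ 2 ^ q * (distMoment q x₀ μ + transportCost q π) := by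
  calc distMoment q x₀ ν
      = ∫⁻ z, ENNReal.ofReal (dist x₀ z.2 ^ q) ∂π := (h.lintegral_snd (by fun_prop)).symm
    _ ≤ ∫⁻ z, 2 ^ q * (ENNReal.ofReal (dist x₀ z.1 ^ q) + ENNReal.ofReal (dist z.1 z.2 ^ q)) ∂π :=
        lintegral_mono fun z => ofReal_rpow_le_two_rpow_mul_add dist_nonneg dist_nonneg
          dist_nonneg (dist_triangle x₀ z.1 z.2) hq
    _ = 2 ^ q * (distMoment q x₀ μ + transportCost q π) := by
        rw [lintegral_const_mul' _ _ (by finiteness), lintegral_add_left (by fun_prop),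
          h.lintegral_fst (f := fun x => ENNReal.ofReal (dist x₀ x ^ q)) (by fun_prop)]
        rfl

theorem measurableSet_lt_dist [OpensMeasurableSpace X] [SecondCountableTopology X] (ε : ℝ) :
    MeasurableSet {z : X × X | ε < dist z.1 z.2} :=
  measurableSet_lt measurable_const (by fun_prop)

theorem setLIntegral_dist_rpow_le [OpensMeasurableSpace X] [SecondCountableTopology X]
    (s : Set (X × X)) (hp : 0 ≤ p) (hq : 0 < q) (hpq : p ≤ q) :
    ∫⁻ z in s, ENNReal.ofReal (dist z.1 z.2 ^ p) ∂π ≤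
      transportCost q π ^ (p / q) * π s ^ (1 - p / q) := by
  have hpq₀ : 0 ≤ p / q := by positivity
  have hpq₁ : 0 ≤ 1 - p / q := sub_nonneg.2 ((div_le_one hq).2 hpq)
  calc ∫⁻ z in s, ENNReal.ofReal (dist z.1 z.2 ^ p) ∂π
      = ∫⁻ z in s, ENNReal.ofReal (dist z.1 z.2 ^ q) ^ (p / q) * 1 ^ (1 - p / q) ∂π := by
        refine lintegral_congr fun z => ?_
        rw [ENNReal.one_rpow, mul_one, ENNReal.ofReal_rpow_of_nonneg (by positivity) hpq₀,
          ← Real.rpow_mul dist_nonneg, mul_div_cancel₀ p hq.ne']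
    _ ≤ (∫⁻ z in s, ENNReal.ofReal (dist z.1 z.2 ^ q) ∂π) ^ (p / q) *
          (∫⁻ _ in s, 1 ∂π) ^ (1 - p / q) :=
        ENNReal.lintegral_mul_norm_pow_le (by fun_prop) (by fun_prop) hpq₀ hpq₁ (by ring)
    _ ≤ transportCost q π ^ (p / q) * π s ^ (1 - p / q) := by
        rw [setLIntegral_one]
        exact mul_le_mul_left (ENNReal.rpow_le_rpow (setLIntegral_le_lintegral s _) hpq₀) _

theorem transportCost_le_add_rpow_mul_rpow [OpensMeasurableSpace X] [SecondCountableTopology X]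
    [IsProbabilityMeasure π] (hp : 0 ≤ p) (hq : 0 < q) (hpq : p ≤ q) (ε : ℝ) :
    transportCost p π ≤ ENNReal.ofReal (ε ^ p) +
      transportCost q π ^ (p / q) * π {z | ε < dist z.1 z.2} ^ (1 - p / q) := by
  have hnear : ∫⁻ z in {z | ε < dist z.1 z.2}ᶜ, ENNReal.ofReal (dist z.1 z.2 ^ p) ∂π ≤
      ENNReal.ofReal (ε ^ p) := by
    refine (setLIntegral_mono' (measurableSet_lt_dist ε).compl (g := fun _ => _) fun z hz =>
      ENNReal.ofReal_le_ofReal (Real.rpow_le_rpow dist_nonneg (not_lt.1 hz) hp)).trans ?_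
    exact (setLIntegral_le_lintegral _ _).trans (by simp)
  rw [transportCost, ← lintegral_add_compl _ (measurableSet_lt_dist ε), add_comm]
  exact add_le_add hnear (setLIntegral_dist_rpow_le _ hp hq hpq)

theorem IsCoupling.levyProkhorovEDist_le [OpensMeasurableSpace X] [IsProbabilityMeasure μ]
    [IsProbabilityMeasure ν] (h : IsCoupling π μ ν)
    (hπ : π {z | ε ≤ dist z.1 z.2} ≤ ENNReal.ofReal ε) :
    levyProkhorovEDist μ ν ≤ ENNReal.ofReal ε := by
  refine levyProkhorovEDist_le_of_forall_le μ ν _ fun δ B hεδ hδ hB => ?_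
  have hsub : (Prod.fst ⁻¹' B : Set (X × X)) ⊆
      Prod.snd ⁻¹' thickening δ.toReal B ∪ {z | ε ≤ dist z.1 z.2} := by
    intro z hz
    refine or_iff_not_imp_right.2 fun hlt => mem_thickening_iff.2 ⟨z.1, hz, ?_⟩
    rw [dist_comm]
    exact (not_le.1 hlt).trans ((ENNReal.ofReal_lt_iff_lt_toReal
      (dist_nonneg.trans (not_le.1 hlt).le) hδ.ne).1 hεδ)
  calc μ B = π (Prod.fst ⁻¹' B) := by rw [← h.1, Measure.map_apply measurable_fst hB]
    _ ≤ π (Prod.snd ⁻¹' thickening δ.toReal B) + π {z | ε ≤ dist z.1 z.2} :=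
        (measure_mono hsub).trans (measure_union_le _ _)
    _ ≤ ν (thickening δ.toReal B) + δ := by
        rw [← h.2, Measure.map_apply measurable_snd isOpen_thickening.measurableSet]
        exact add_le_add_right (hπ.trans hεδ.le) _

theorem measure_le_dist_le_of_transportCost_le [OpensMeasurableSpace X]
    [SecondCountableTopology X] (hq : 0 ≤ q) (hε : 0 < ε)
    (h : transportCost q π ≤ ENNReal.ofReal (ε ^ q) * ENNReal.ofReal ε) :
    π {z | ε ≤ dist z.1 z.2} ≤ ENNReal.ofReal ε := by
  have hεq : ENNReal.ofReal (ε ^ q) ≠ 0 := by simpa using Real.rpow_pos_of_pos hε q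
  calc π {z | ε ≤ dist z.1 z.2}
      ≤ π {z | ENNReal.ofReal (ε ^ q) ≤ ENNReal.ofReal (dist z.1 z.2 ^ q)} :=
        measure_mono fun z hz => ENNReal.ofReal_le_ofReal (Real.rpow_le_rpow hε.le hz hq)
    _ ≤ transportCost q π / ENNReal.ofReal (ε ^ q) :=
        meas_ge_le_lintegral_div (by fun_prop) hεq ENNReal.ofReal_ne_top
    _ ≤ ENNReal.ofReal ε := ENNReal.div_le_of_le_mul' h

end TransportCost

section WeakConvergence

theorem exists_measurable_partition_null_frontier [PseudoMetricSpace X] [MeasurableSpace X]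
    [OpensMeasurableSpace X] [TopologicalSpace.SeparableSpace X] (μ : Measure X) [SFinite μ]
    {ε : ℝ} (hε : 0 < ε) :
    ∃ A : ℕ → Set X, (∀ i, MeasurableSet (A i)) ∧ Pairwise (Function.onFun Disjoint A) ∧
      ⋃ i, A i = univ ∧ (∀ i, μ (frontier (A i)) = 0) ∧
      ∀ i, ∀ x ∈ A i, ∀ y ∈ A i, dist x y ≤ ε := by
  rcases isEmpty_or_nonempty X with hX | hX
  · exact ⟨fun _ => ∅, by simp, fun _ _ _ => disjoint_bot_left, Subsingleton.elim _ _, by simp,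
      by simp⟩
  obtain ⟨u, hu⟩ := TopologicalSpace.exists_dense_seq X
  choose r hr hr_null using fun k =>
    exists_null_frontier_thickening μ {u k} (show ε / 4 < ε / 2 by linarith)
  simp only [thickening_singleton] at hr_null
  refine ⟨disjointed fun k => ball (u k) (r k),
    fun i => .disjointed (fun k => measurableSet_ball) i, disjoint_disjointed _, ?_,
    fun i => ?_, fun i x hx y hy => ?_⟩
  · rw [iUnion_disjointed]
    refine eq_univ_of_forall fun x => ?_
    obtain ⟨k, hk⟩ := hu.exists_dist_lt x (show 0 < ε / 4 by linarith)
    exact mem_iUnion.2 ⟨k, hk.trans (hr k).1⟩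
  · refine disjointedRec (p := fun s => μ (frontier s) = 0) (fun t j ht => ?_) (hr_null i)
    rw [sdiff_eq]
    exact null_frontier_inter ht (by rw [frontier_compl, hr_null])
  · have hxu := mem_ball.1 (disjointed_subset _ i hx)
    have hyu := mem_ball.1 (disjointed_subset _ i hy)
    linarith [dist_triangle_right x y (u i), (hr i).2]

theorem eventually_exists_isCoupling_measure_lt_dist_le [PseudoMetricSpace X]
    [MeasurableSpace X] [OpensMeasurableSpace X] [SecondCountableTopology X] {ι : Type*}
    {l : Filter ι} {νs : ι → ProbabilityMeasure X} {ν : ProbabilityMeasure X}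
    (h : Tendsto νs l (𝓝 ν)) {ε : ℝ} (hε : 0 < ε) {δ : ℝ≥0∞} (hδ : 0 < δ) :
    ∀ᶠ n in l, ∃ π, IsCoupling π (νs n : Measure X) ν ∧ π {z | ε < dist z.1 z.2} ≤ δ := by
  obtain ⟨A, hA, hd, hcov, hfr, hdiam⟩ :=
    exists_measurable_partition_null_frontier (ν : Measure X) hε
  obtain ⟨s, hs⟩ : ∃ s : Finset ℕ, 1 < ∑ i ∈ s, (ν : Measure X) (A i) + δ := by
    have hsum : Tendsto (fun s => ∑ i ∈ s, (ν : Measure X) (A i)) atTop (𝓝 1) := by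
      rw [← measure_univ (μ := (ν : Measure X)), ← hcov, measure_iUnion hd hA]
      exact ENNReal.summable.hasSum
    have hlim := hsum.add (tendsto_const_nhds (x := δ))
    exact (hlim.eventually_const_lt (ENNReal.lt_add_right ENNReal.one_ne_top hδ.ne')).exists
  have hmin : Tendsto
      (fun n => ∑ i ∈ s, min ((νs n : Measure X) (A i)) ((ν : Measure X) (A i)) + δ) l
      (𝓝 (∑ i ∈ s, (ν : Measure X) (A i) + δ)) := by
    refine (tendsto_finsetSum _ fun i _ => ?_).add tendsto_const_nhds
    simpa using (ProbabilityMeasure.tendsto_measure_of_null_frontier_of_tendsto' h (hfr i)).min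
      (tendsto_const_nhds (x := (ν : Measure X) (A i)))
  filter_upwards [hmin.eventually_const_lt hs] with n hn
  obtain ⟨π, hπ, hle⟩ := exists_isCoupling_tsum_min_le (μ := (νs n : Measure X))
    (ν := (ν : Measure X)) (by simp) hA hd
  have := hπ.isProbabilityMeasure
  refine ⟨π, hπ, ?_⟩
  have hnear : ⋃ i, A i ×ˢ A i ⊆ {z : X × X | ε < dist z.1 z.2}ᶜ :=
    iUnion_subset fun i z hz => not_lt.2 (hdiam i z.1 hz.1 z.2 hz.2)
  have hcompl : 1 ≤ π {z | ε < dist z.1 z.2}ᶜ + δ :=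
    hn.le.trans <| add_le_add_left
      ((ENNReal.sum_le_tsum s).trans (hle.trans (measure_mono hnear))) δ
  rw [← compl_compl {z : X × X | ε < dist z.1 z.2},
    prob_compl_eq_one_sub (measurableSet_lt_dist ε).compl]
  exact tsub_le_iff_left.2 hcompl

theorem lowerSemicontinuous_lintegral_ofReal [TopologicalSpace X]
    [TopologicalSpace.PseudoMetrizableSpace X] [TopologicalSpace.SeparableSpace X]
    [MeasurableSpace X] [OpensMeasurableSpace X] {f : X → ℝ} (hf : Continuous f) (hf₀ : 0 ≤ f) :
    LowerSemicontinuous fun μ : ProbabilityMeasure X =>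
      ∫⁻ x, ENNReal.ofReal (f x) ∂(μ : Measure X) := by
  refine lowerSemicontinuous_iff_isClosed_preimage.2 fun c => IsSeqClosed.isClosed ?_
  intro μs μ hμs hlim
  refine (lintegral_le_liminf_lintegral_of_forall_isOpen_measure_le_liminf_measure hf hf₀
    fun G hG => ProbabilityMeasure.le_liminf_measure_open_of_tendsto hlim hG).trans ?_
  exact liminf_le_of_frequently_le' (Frequently.of_forall hμs)

theorem lowerSemicontinuous_distMoment [PseudoMetricSpace X] [TopologicalSpace.SeparableSpace X]
    [MeasurableSpace X] [OpensMeasurableSpace X] {q : ℝ} (hq : 0 ≤ q) (x₀ : X) :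
    LowerSemicontinuous fun μ : ProbabilityMeasure X => distMoment q x₀ (μ : Measure X) :=
  lowerSemicontinuous_lintegral_ofReal
    ((continuous_const.dist continuous_id).rpow_const fun _ => Or.inr hq)
    fun _ => Real.rpow_nonneg dist_nonneg q

theorem lowerSemicontinuous_transportCost [PseudoMetricSpace X] [SecondCountableTopology X]
    [MeasurableSpace X] [OpensMeasurableSpace X] {q : ℝ} (hq : 0 ≤ q) :
    LowerSemicontinuous fun π : ProbabilityMeasure (X × X) =>
      transportCost q (π : Measure (X × X)) :=
  lowerSemicontinuous_lintegral_ofReal (continuous_dist.rpow_const fun _ => Or.inr hq)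
    fun _ => Real.rpow_nonneg dist_nonneg q

theorem isCompact_setOf_map_fst_mem_map_snd_mem [MetricSpace X] [MeasurableSpace X]
    [BorelSpace X] [CompleteSpace X] [SecondCountableTopology X]
    {S T : Set (ProbabilityMeasure X)} (hS : IsCompact S) (hT : IsCompact T) :
    IsCompact {π : ProbabilityMeasure (X × X) |
      π.map measurable_fst.aemeasurable ∈ S ∧ π.map measurable_snd.aemeasurable ∈ T} := by
  have hclosed : IsClosed {π : ProbabilityMeasure (X × X) |
      π.map measurable_fst.aemeasurable ∈ S ∧ π.map measurable_snd.aemeasurable ∈ T} :=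
    (hS.isClosed.preimage (ProbabilityMeasure.continuous_map continuous_fst)).inter
      (hT.isClosed.preimage (ProbabilityMeasure.continuous_map continuous_snd))
  refine hclosed.closure_eq ▸ isCompact_closure_of_isTightMeasureSet ?_
  refine IsTightMeasureSet.prodMk
    ((isTightMeasureSet_of_isCompact_closure hS.closure).subset ?_)
    ((isTightMeasureSet_of_isCompact_closure hT.closure).subset ?_)
  · rintro _ ⟨_, ⟨π, hπ, rfl⟩, rfl⟩
    exact ⟨_, hπ.1, rfl⟩
  · rintro _ ⟨_, ⟨π, hπ, rfl⟩, rfl⟩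
    exact ⟨_, hπ.2, rfl⟩

theorem isCoupling_coe_iff [MeasurableSpace X] {π : ProbabilityMeasure (X × X)}
    {μ ν : ProbabilityMeasure X} : IsCoupling (π : Measure (X × X)) μ ν ↔
      π.map measurable_fst.aemeasurable = μ ∧ π.map measurable_snd.aemeasurable = ν := by
  simp only [IsCoupling, ← ProbabilityMeasure.toMeasure_injective.eq_iff,
    ProbabilityMeasure.toMeasure_map]

theorem exists_tendsto_subseq_of_isCoupling [MetricSpace X] [MeasurableSpace X] [BorelSpace X]
    [CompleteSpace X] [SecondCountableTopology X] {μs νs : ℕ → ProbabilityMeasure X}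
    {μ ν : ProbabilityMeasure X} (hμ : Tendsto μs atTop (𝓝 μ)) (hν : Tendsto νs atTop (𝓝 ν))
    {πs : ℕ → ProbabilityMeasure (X × X)}
    (hπs : ∀ n, IsCoupling (πs n : Measure (X × X)) (μs n) (νs n)) :
    ∃ π, ∃ φ : ℕ → ℕ, StrictMono φ ∧ Tendsto (πs ∘ φ) atTop (𝓝 π) := by
  obtain ⟨π, -, φ, hφ, hπ⟩ := (isCompact_setOf_map_fst_mem_map_snd_mem hμ.isCompact_insert_range
    hν.isCompact_insert_range).isSeqCompact (x := πs) fun n =>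
      (isCoupling_coe_iff.1 (hπs n)).imp (fun h => .inr ⟨n, h.symm⟩) fun h => .inr ⟨n, h.symm⟩
  exact ⟨π, φ, hφ, hπ⟩

theorem isCoupling_of_tendsto [MetricSpace X] [MeasurableSpace X] [BorelSpace X]
    [SecondCountableTopology X] {ι : Type*} {l : Filter ι} [l.NeBot]
    {πs : ι → ProbabilityMeasure (X × X)} {π : ProbabilityMeasure (X × X)}
    {μs νs : ι → ProbabilityMeasure X} {μ ν : ProbabilityMeasure X} (hπ : Tendsto πs l (𝓝 π))
    (hμ : Tendsto μs l (𝓝 μ)) (hν : Tendsto νs l (𝓝 ν))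
    (h : ∀ n, IsCoupling (πs n : Measure (X × X)) (μs n) (νs n)) :
    IsCoupling (π : Measure (X × X)) μ ν := by
  simp only [isCoupling_coe_iff] at h ⊢
  constructor
  · refine tendsto_nhds_unique ?_ hμ
    simpa only [Function.comp_def, h] using
      ((ProbabilityMeasure.continuous_map continuous_fst).tendsto π).comp hπ
  · refine tendsto_nhds_unique ?_ hν
    simpa only [Function.comp_def, h] using
      ((ProbabilityMeasure.continuous_map continuous_snd).tendsto π).comp hπ

theorem isTightMeasureSet_setOf_distMoment_le [PseudoMetricSpace X] [ProperSpace X]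
    [MeasurableSpace X] [OpensMeasurableSpace X] {q : ℝ} (hq : 0 < q) (x₀ : X) {C : ℝ≥0∞}
    (hC : C ≠ ⊤) : IsTightMeasureSet {μ : Measure X | distMoment q x₀ μ ≤ C} := by
  refine isTightMeasureSet_iff_exists_isCompact_measure_compl_le.2 fun ε hε => ?_
  have hlim : Tendsto (fun r : ℝ => C / ENNReal.ofReal (r ^ q)) atTop (𝓝 0) := by
    rw [← ENNReal.div_top (a := C)]
    exact ENNReal.Tendsto.const_div
      (ENNReal.tendsto_ofReal_nhds_top.2 (tendsto_rpow_atTop hq)) (Or.inr hC)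
  obtain ⟨r, hr, hr₀⟩ := ((hlim.eventually_lt_const hε).and (eventually_gt_atTop 0)).exists
  have hrq : ENNReal.ofReal (r ^ q) ≠ 0 := by simpa using Real.rpow_pos_of_pos hr₀ q
  refine ⟨closedBall x₀ r, isCompact_closedBall x₀ r, fun μ hμ => ?_⟩
  have hsub : (closedBall x₀ r)ᶜ ⊆
      {x | ENNReal.ofReal (r ^ q) ≤ ENNReal.ofReal (dist x₀ x ^ q)} := by
    intro x hx
    rw [mem_compl_iff, mem_closedBall', not_le] at hx
    exact ENNReal.ofReal_le_ofReal (Real.rpow_le_rpow hr₀.le hx.le hq.le)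
  calc μ (closedBall x₀ r)ᶜ
      ≤ distMoment q x₀ μ / ENNReal.ofReal (r ^ q) := (measure_mono hsub).trans <|
        meas_ge_le_lintegral_div (by fun_prop) hrq ENNReal.ofReal_ne_top
    _ ≤ C / ENNReal.ofReal (r ^ q) := ENNReal.div_le_div_right hμ _
    _ ≤ ε := hr.le

theorem isCompact_setOf_distMoment_le [MetricSpace X] [ProperSpace X] [MeasurableSpace X]
    [BorelSpace X] {q : ℝ} (hq : 0 < q) (x₀ : X) {C : ℝ≥0∞} (hC : C ≠ ⊤) :
    IsCompact {μ : ProbabilityMeasure X | distMoment q x₀ (μ : Measure X) ≤ C} := by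
  have hclosed : IsClosed {μ : ProbabilityMeasure X | distMoment q x₀ (μ : Measure X) ≤ C} :=
    (lowerSemicontinuous_distMoment hq.le x₀).isClosed_preimage C
  refine hclosed.closure_eq ▸ isCompact_closure_of_isTightMeasureSet ?_
  refine (isTightMeasureSet_setOf_distMoment_le hq x₀ hC).subset ?_
  rintro _ ⟨μ, hμ, rfl⟩
  exact hμ

theorem weakConv_coe_iff [TopologicalSpace X] [MeasurableSpace X] [OpensMeasurableSpace X]
    {μs : ℕ → ProbabilityMeasure X} {μ : ProbabilityMeasure X} :
    WeakConv (fun n => (μs n : Measure X)) μ ↔ Tendsto μs atTop (𝓝 μ) :=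
  ProbabilityMeasure.tendsto_iff_forall_integral_tendsto.symm

end WeakConvergence

section Wasserstein

variable [MetricSpace X] [MeasurableSpace X] {μ ν : Measure X} {x₀ : X} {p q : ℝ}

theorem IsCoupling.wCost_le [IsProbabilityMeasure μ] {π : Measure (X × X)}
    (h : IsCoupling π μ ν) : wCost q μ ν ≤ transportCost q π :=
  iInf₂_le π ⟨h.isProbabilityMeasure, h⟩

theorem exists_isCoupling_transportCost_lt {c : ℝ≥0∞} (h : wCost q μ ν < c) :
    ∃ π : ProbabilityMeasure (X × X), IsCoupling (π : Measure (X × X)) μ ν ∧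
      transportCost q (π : Measure (X × X)) < c := by
  simp only [wCost, iInf_lt_iff] at h
  obtain ⟨π, ⟨hπ, hc⟩, hlt⟩ := h
  exact ⟨⟨π, hπ⟩, hc, hlt⟩

theorem wCost_comm (q : ℝ) (μ ν : Measure X) : wCost q μ ν = wCost q ν μ := by
  have hle (μ ν : Measure X) : wCost q μ ν ≤ wCost q ν μ := by
    refine le_iInf₂ fun π ⟨hπ, hc⟩ => ?_
    refine (iInf₂_le (π.map Prod.swap) ⟨?_, hc.swap⟩).trans (transportCost_map_swap q π).le
    exact Measure.isProbabilityMeasure_map measurable_swap.aemeasurable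
  exact (hle μ ν).antisymm (hle ν μ)

theorem momentBall_subset_Pp {C : ℝ≥0∞} (hC : C ≠ ⊤) : momentBall q x₀ C ⊆ Pp q x₀ :=
  fun _ hμ => ⟨hμ.1, hμ.2.trans_lt hC.lt_top⟩

theorem wCost_ne_top [OpensMeasurableSpace X] (hq : 0 ≤ q) (hμ : μ ∈ Pp q x₀)
    (hν : ν ∈ Pp q x₀) : wCost q μ ν ≠ ⊤ := by
  obtain ⟨_, hμ⟩ := hμ
  obtain ⟨_, hν⟩ := hν
  have hprod : IsCoupling (μ.prod ν) μ ν := ⟨Measure.fst_prod, Measure.snd_prod⟩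
  refine ne_top_of_le_ne_top ?_ (hprod.wCost_le.trans (hprod.transportCost_le x₀ hq))
  exact ENNReal.mul_ne_top (by finiteness) (ENNReal.add_ne_top.2 ⟨hμ.ne, hν.ne⟩)

theorem distMoment_le_of_wCost_lt [OpensMeasurableSpace X] (hq : 0 ≤ q) (x₀ : X) {c : ℝ≥0∞}
    (h : wCost q μ ν < c) : distMoment q x₀ ν ≤ 2 ^ q * (distMoment q x₀ μ + c) := by
  obtain ⟨π, hπ, hlt⟩ := exists_isCoupling_transportCost_lt h
  exact (hπ.distMoment_le x₀ hq).trans (mul_le_mul_right (add_le_add_right hlt.le _) _)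

theorem Wp_le_iff_wCost_le (hq : 0 < q) (h : wCost q μ ν ≠ ⊤) {R : ℝ} (hR : 0 ≤ R) :
    Wp q μ ν ≤ R ↔ wCost q μ ν ≤ ENNReal.ofReal R ^ q := by
  rw [Wp, ← ENNReal.le_ofReal_iff_toReal_le (by finiteness) hR, one_div,
    ENNReal.rpow_inv_le_iff hq]

theorem wpTendsto_of_tendsto_wCost (hq : 0 < q) {μs : ℕ → Measure X}
    (h : Tendsto (fun n => wCost q (μs n) μ) atTop (𝓝 0)) : WpTendsto q μs μ := by
  have hroot : Tendsto (fun n => wCost q (μs n) μ ^ (1 / q)) atTop (𝓝 0) := by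
    simpa [hq] using h.ennrpow_const (1 / q)
  exact (ENNReal.tendsto_toReal ENNReal.zero_ne_top).comp hroot

theorem WpTendsto.tendsto_wCost (hq : 0 < q) {μs : ℕ → Measure X}
    (hfin : ∀ n, wCost q (μs n) μ ≠ ⊤) (h : WpTendsto q μs μ) :
    Tendsto (fun n => wCost q (μs n) μ) atTop (𝓝 0) := by
  have hroot : ∀ n, wCost q (μs n) μ ^ (1 / q) ≠ ⊤ := fun n =>
    ENNReal.rpow_ne_top_of_nonneg (by positivity) (hfin n)
  have hlim : Tendsto (fun n => wCost q (μs n) μ ^ (1 / q)) atTop (𝓝 0) :=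
    (ENNReal.tendsto_toReal_zero_iff hroot).1 h
  simpa [← ENNReal.rpow_mul, hq, hq.ne'] using hlim.ennrpow_const q

theorem tendsto_of_tendsto_wCost [OpensMeasurableSpace X] [SecondCountableTopology X] {ι : Type*}
    {l : Filter ι} (hq : 0 ≤ q) {μs : ι → ProbabilityMeasure X} {μ : ProbabilityMeasure X}
    (h : Tendsto (fun n => wCost q (μs n : Measure X) μ) l (𝓝 0)) : Tendsto μs l (𝓝 μ) := by
  suffices Tendsto (fun n => LevyProkhorov.ofMeasure (μs n)) l (𝓝 (.ofMeasure μ)) from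
    (LevyProkhorov.continuous_toMeasure_probabilityMeasure.tendsto _).comp this
  refine Metric.nhds_basis_closedEBall.tendsto_right_iff.2 fun e he => ?_
  obtain ⟨ε, -, hεe⟩ := ENNReal.lt_iff_exists_real_btwn.1 he
  have hε₀ : 0 < ε := ENNReal.ofReal_pos.1 hεe.1
  have hpos : 0 < ENNReal.ofReal (ε ^ q) * ENNReal.ofReal ε := by
    rw [← ENNReal.ofReal_mul (by positivity)]
    exact ENNReal.ofReal_pos.2 (by positivity)
  filter_upwards [h.eventually_lt_const hpos] with n hn
  obtain ⟨π, hπ, hlt⟩ := exists_isCoupling_transportCost_lt hn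
  have hfar := measure_le_dist_le_of_transportCost_le hq hε₀ hlt.le
  exact (hπ.levyProkhorovEDist_le hfar).trans hεe.2.le

theorem tendsto_ofReal_rpow_add_mul_ofReal_rpow {a b : ℝ} (ha : 0 < a) (hb : 0 < b) {c : ℝ≥0∞}
    (hc : c ≠ ⊤) :
    Tendsto (fun ε : ℝ => ENNReal.ofReal (ε ^ a) + c * ENNReal.ofReal ε ^ b) (𝓝 0) (𝓝 0) := by
  have hfst : Tendsto (fun ε : ℝ => ENNReal.ofReal (ε ^ a)) (𝓝 0) (𝓝 0) := by
    simpa [ha.ne'] using ENNReal.tendsto_ofReal (Real.continuousAt_rpow_const 0 a (Or.inr ha.le))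
  have hsnd : Tendsto (fun ε : ℝ => ENNReal.ofReal ε ^ b) (𝓝 0) (𝓝 0) := by
    simpa [hb] using (ENNReal.tendsto_ofReal (tendsto_id (x := 𝓝 (0 : ℝ)))).ennrpow_const b
  simpa using hfst.add (ENNReal.Tendsto.const_mul hsnd (Or.inr hc))

theorem tendsto_wCost_of_tendsto [OpensMeasurableSpace X] [SecondCountableTopology X]
    {ι : Type*} {l : Filter ι} (hp : 0 < p) (hpq : p < q) {νs : ι → ProbabilityMeasure X}
    {ν : ProbabilityMeasure X} (h : Tendsto νs l (𝓝 ν)) {C : ℝ≥0∞} (hC : C ≠ ⊤)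
    (hνs : ∀ᶠ n in l, distMoment q x₀ (νs n : Measure X) ≤ C)
    (hν : distMoment q x₀ (ν : Measure X) ≤ C) :
    Tendsto (fun n => wCost p (νs n : Measure X) ν) l (𝓝 0) := by
  have hq : 0 < q := hp.trans hpq
  have hexp : 0 < 1 - p / q := sub_pos.2 ((div_lt_one hq).2 hpq)
  have hbound : ∀ ε > 0, ∀ᶠ n in l, wCost p (νs n : Measure X) ν ≤ ENNReal.ofReal (ε ^ p) +
      (2 ^ q * (C + C)) ^ (p / q) * ENNReal.ofReal ε ^ (1 - p / q) := by
    intro ε hε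
    filter_upwards [hνs, eventually_exists_isCoupling_measure_lt_dist_le h hε
      (ENNReal.ofReal_pos.2 hε)] with n hn ⟨π, hπ, hπε⟩
    have := hπ.isProbabilityMeasure
    have hcost : transportCost q π ≤ 2 ^ q * (C + C) :=
      (hπ.transportCost_le x₀ hq.le).trans (mul_le_mul_right (add_le_add hn hν) _)
    refine hπ.wCost_le.trans
      ((transportCost_le_add_rpow_mul_rpow hp.le hq hpq.le ε).trans ?_)
    gcongr
  have hconst : (2 ^ q * (C + C)) ^ (p / q) ≠ ⊤ := by finiteness
  have hlim := (tendsto_ofReal_rpow_add_mul_ofReal_rpow hp hexp hconst).mono_left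
    (nhdsWithin_le_nhds (s := Ioi 0))
  refine ENNReal.tendsto_nhds_zero.2 fun e he => ?_
  obtain ⟨ε, hlt, hε⟩ := ((hlim.eventually_lt_const he).and self_mem_nhdsWithin).exists
  filter_upwards [hbound ε hε] with n hn using hn.trans hlt.le

theorem lowerSemicontinuous_wCost [BorelSpace X] [CompleteSpace X] [SecondCountableTopology X]
    (hq : 0 ≤ q) : LowerSemicontinuous fun P : ProbabilityMeasure X × ProbabilityMeasure X =>
      wCost q (P.1 : Measure X) P.2 := by
  refine lowerSemicontinuous_iff_isClosed_preimage.2 fun c => IsSeqClosed.isClosed ?_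
  rintro P ⟨μ, ν⟩ hP hlim
  refine mem_preimage.2 (le_of_forall_gt_imp_ge_of_dense (α := ℝ≥0∞) fun c' hc' => ?_)
  choose πs hπs hcost using fun n => exists_isCoupling_transportCost_lt ((hP n).trans_lt hc')
  obtain ⟨π, φ, hφ, hπ⟩ := exists_tendsto_subseq_of_isCoupling hlim.fst_nhds hlim.snd_nhds hπs
  have hcoupling : IsCoupling (π : Measure (X × X)) μ ν :=
    isCoupling_of_tendsto hπ (hlim.fst_nhds.comp hφ.tendsto_atTop)
      (hlim.snd_nhds.comp hφ.tendsto_atTop) fun n => hπs (φ n)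
  have hle : transportCost q (π : Measure (X × X)) ≤ c' :=
    ((lowerSemicontinuous_transportCost hq).isClosed_preimage c').mem_of_tendsto hπ
      (.of_forall fun n => (hcost (φ n)).le)
  exact hcoupling.wCost_le.trans hle

theorem Wp_le_of_tendsto [BorelSpace X] [CompleteSpace X] [SecondCountableTopology X]
    (hq : 0 < q) {μs νs : ℕ → ProbabilityMeasure X} {μ ν : ProbabilityMeasure X}
    (hμ : Tendsto μs atTop (𝓝 μ)) (hν : Tendsto νs atTop (𝓝 ν))
    (hfin : ∀ n, wCost q (μs n : Measure X) (νs n) ≠ ⊤) {R : ℝ}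
    (h : ∀ n, Wp q (μs n : Measure X) (νs n) ≤ R) : Wp q (μ : Measure X) ν ≤ R := by
  have hR : 0 ≤ R := ENNReal.toReal_nonneg.trans (h 0)
  have hle : wCost q (μ : Measure X) ν ≤ ENNReal.ofReal R ^ q :=
    ((lowerSemicontinuous_wCost hq.le).isClosed_preimage _).mem_of_tendsto (hμ.prodMk_nhds hν)
      (.of_forall fun n => (Wp_le_iff_wCost_le hq (hfin n) hR).1 (h n))
  exact (Wp_le_iff_wCost_le hq (ne_top_of_le_ne_top (by finiteness) hle) hR).2 hle

theorem exists_setOf_Wp_le_subset_momentBall [OpensMeasurableSpace X] (hq : 0 < q)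
    {K : Set (Measure X)} {C : ℝ≥0∞} (hC : C ≠ ⊤) (hK : K ⊆ momentBall q x₀ C) (R : ℝ) :
    ∃ D ≠ ⊤, {ν : Measure X | ν ∈ Pp q x₀ ∧ ∃ μ ∈ K, Wp q μ ν ≤ R} ⊆ momentBall q x₀ D := by
  refine ⟨2 ^ q * (C + (ENNReal.ofReal R ^ q + 1)), by finiteness, ?_⟩
  rintro ν ⟨hν, μ, hμ, hμν⟩
  have hfin := wCost_ne_top hq.le (momentBall_subset_Pp hC (hK hμ)) hν
  have hcost : wCost q μ ν < ENNReal.ofReal R ^ q + 1 :=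
    ((Wp_le_iff_wCost_le hq hfin (ENNReal.toReal_nonneg.trans hμν)).1 hμν).trans_lt
      (ENNReal.lt_add_right (by finiteness) one_ne_zero)
  exact ⟨hν.1, (distMoment_le_of_wCost_lt hq.le x₀ hcost).trans
    (mul_le_mul_right (add_le_add_left (hK hμ).2 _) _)⟩

end Wasserstein

theorem WpSeqCompact.weakSeqCompact [MetricSpace X] [MeasurableSpace X] [OpensMeasurableSpace X]
    [SecondCountableTopology X] {x₀ : X} {q : ℝ} (hq : 0 < q) {K : Set (Measure X)}
    (hK : K ⊆ Pp q x₀) (h : WpSeqCompact q K) : WeakSeqCompact K := by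
  intro μs hμs
  obtain ⟨μ, hμ, φ, hφ, hlim⟩ := h μs hμs
  replace hlim := hlim.tendsto_wCost hq fun n => wCost_ne_top hq.le (hK (hμs (φ n))) (hK hμ)
  lift μ to ProbabilityMeasure X using (hK hμ).1
  lift μs to ℕ → ProbabilityMeasure X using fun n => (hK (hμs n)).1
  exact ⟨μ, hμ, φ, hφ, weakConv_coe_iff.2 (tendsto_of_tendsto_wCost hq.le hlim)⟩

theorem WpSeqCompact.exists_subset_momentBall [MetricSpace X] [MeasurableSpace X]
    [OpensMeasurableSpace X] {x₀ : X} {q : ℝ} (hq : 0 < q) {K : Set (Measure X)}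
    (hK : K ⊆ Pp q x₀) (h : WpSeqCompact q K) : ∃ C ≠ ⊤, K ⊆ momentBall q x₀ C := by
  by_contra! hunbdd
  have hlarge (n : ℕ) : ∃ μ ∈ K, (n : ℝ≥0∞) < distMoment q x₀ μ := by
    obtain ⟨μ, hμ, hμn⟩ := not_subset.1 (hunbdd n (ENNReal.natCast_ne_top n))
    exact ⟨μ, hμ, not_le.1 fun hle => hμn ⟨(hK hμ).1, hle⟩⟩
  choose μs hμs hmoment using hlarge
  obtain ⟨μ, hμ, φ, hφ, hlim⟩ := h μs hμs
  replace hlim := hlim.tendsto_wCost hq fun n => wCost_ne_top hq.le (hK (hμs (φ n))) (hK hμ)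
  have hD : 2 ^ q * (distMoment q x₀ μ + 1) ≠ ⊤ :=
    ENNReal.mul_ne_top (by finiteness) (ENNReal.add_ne_top.2 ⟨(hK hμ).2.ne, ENNReal.one_ne_top⟩)
  obtain ⟨n, hn₁, hnD⟩ := ((hlim.eventually_lt_const one_pos).and
    ((ENNReal.tendsto_nat_nhds_top.comp hφ.tendsto_atTop).eventually_const_lt hD.lt_top)).exists
  rw [wCost_comm] at hn₁
  exact (hnD.trans (hmoment (φ n))).not_ge (distMoment_le_of_wCost_lt hq.le x₀ hn₁)

theorem wasserstein_q_nbhd_wp_seq_compact_general [MetricSpace X] [MeasurableSpace X]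
    [BorelSpace X] [ProperSpace X] (x₀ : X) {p q : ℝ} (hp : 0 < p) (hpq : p < q)
    {K : Set (Measure X)} {C : ℝ≥0∞} (hC : C ≠ ⊤) (hK_sub : K ⊆ momentBall q x₀ C)
    (hK_cpt : WeakSeqCompact K) (R : ℝ) :
    WpSeqCompact p {ν : Measure X | ν ∈ Pp q x₀ ∧ ∃ μ ∈ K, Wp q μ ν ≤ R} := by
  intro νs hνs
  have hq : 0 < q := hp.trans hpq
  obtain ⟨D, hD, hND⟩ := exists_setOf_Wp_le_subset_momentBall hq hC hK_sub R
  choose μs hμK hμν using fun n => (hνs n).2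
  have hfin (n : ℕ) : wCost q (μs n) (νs n) ≠ ⊤ :=
    wCost_ne_top hq.le (momentBall_subset_Pp hC (hK_sub (hμK n))) (hνs n).1
  obtain ⟨μ, hμ, φ, hφ, hμlim⟩ := hK_cpt μs hμK
  lift μ to ProbabilityMeasure X using (hK_sub hμ).1
  lift μs to ℕ → ProbabilityMeasure X using fun n => (hK_sub (hμK n)).1
  lift νs to ℕ → ProbabilityMeasure X using fun n => (hνs n).1.1
  have hνD (n : ℕ) : distMoment q x₀ (νs n : Measure X) ≤ D := (hND (hνs n)).2
  obtain ⟨ν, hν, ψ, hψ, hνlim⟩ := (isCompact_setOf_distMoment_le hq x₀ hD).isSeqCompact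
    fun n => hνD (φ n)
  have hμνR : Wp q (μ : Measure X) ν ≤ R :=
    Wp_le_of_tendsto hq ((weakConv_coe_iff.1 hμlim).comp hψ.tendsto_atTop) hνlim
      (fun n => hfin (φ (ψ n))) fun n => hμν (φ (ψ n))
  refine ⟨ν, ⟨momentBall_subset_Pp hD ⟨ν.2, hν⟩, μ, hμ, hμνR⟩, φ ∘ ψ, hφ.comp hψ, ?_⟩
  exact wpTendsto_of_tendsto_wCost hp <| tendsto_wCost_of_tendsto hp hpq hνlim hD
    (.of_forall fun n => hνD (φ (ψ n))) hν

/-- For `1 ≤ p < q`, every closed `w_q`-`R`-neighborhood of a `w_q`-compact subset of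
`P_q(X)` of a proper space `X` is sequentially compact with respect to the metric `w_p`. -/
theorem wasserstein_q_nbhd_wp_seq_compact
    [MetricSpace X] [MeasurableSpace X] [BorelSpace X] [ProperSpace X] [CompleteSpace X]
    [TopologicalSpace.SeparableSpace X] (x₀ : X)
    (p q : ℝ) (hp : 1 ≤ p) (hpq : p < q)
    (K : Set (Measure X)) (hK_sub : K ⊆ Pp q x₀) (hK_cpt : WpSeqCompact q K)
    (R : ℝ) (hR : 0 ≤ R) :
    WpSeqCompact p {ν : Measure X | ν ∈ Pp q x₀ ∧ ∃ μ ∈ K, Wp q μ ν ≤ R} := by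
  have hq : 0 < q := by linarith
  obtain ⟨C, hC, hKC⟩ := hK_cpt.exists_subset_momentBall hq hK_sub
  exact wasserstein_q_nbhd_wp_seq_compact_general x₀ (by linarith) hpq hC hKC
    (hK_cpt.weakSeqCompact hq hK_sub) R
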